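/- Let l ≥ 2, F = GF(2^{2l}), t = 2^l, and L₅ = {α ∈ F : α ≠ 0 and α^t + α^{t−1} + 1 ≠ 0}. The minimum distance of the binary Goppa code Γ(L₅, X^{t+1} + X^t + X) equals exactly its design distance 2(t+1) + 1 = 2t + 3: every nonempty codeword S satisfies |S| ≥ 2t + 3, and there exists a codeword of cardinality exactly 2t + 3. (Paper's Corollary 4, for the code Γ(L₅,G₅) equivalent to Γ(L₇, X^{t+1}+1) via the translation x ↦ x + 1.) -/

import Mathlib

open Finset

/-!
Write `σ = ∏_{α ∈ S} (X - α)` for the locator polynomial of a support `S`. Then `S` is a codeword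
of `Γ(L, G)` if and only if `G ∣ σ'`. In characteristic two `σ'' = 0`, so a separable `G` dividing
`σ'` does so with its square, and `|S| > deg σ' ≥ 2 deg G`.

For `t = 2 ^ l` the polynomial `X ^ (t + 1) + X ^ t + X` is `u + 1` with `u = (X + 1) ^ (t + 1)`.
Since `(X + 1) u' = u`, the polynomial `σ = (X + 1) (u + r) (u + r⁻¹)` has `σ' = (u + 1) ^ 2`, so
its roots form a codeword attaining the bound as soon as they are distinct and lie in the field.
This is the case for `r = w ^ (t + 1) ∉ {0, 1}` when the field contains the `(t + 1)`-st roots of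
unity.
-/

open Polynomial Lagrange

section Polynomial

variable {R : Type*} [CommRing R]

lemma derivative_derivative_eq_zero_of_charTwo [CharP R 2] (p : R[X]) :
    derivative (derivative p) = 0 := by
  have h := congrFun (factorial_smul_hasseDeriv (R := R) 2) p
  rw [LinearMap.smul_apply, Nat.factorial_two, CharTwo.two_nsmul] at h
  exact h.symm

lemma sq_dvd_of_separable_of_dvd {f p : R[X]} (hf : f.Separable) (hdvd : f ∣ p)
    (hp : derivative p = 0) : f ^ 2 ∣ p := by
  obtain ⟨h, rfl⟩ := hdvd
  have hmul : f ∣ derivative f * h := by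
    rw [derivative_mul] at hp
    exact ⟨-derivative h, by linear_combination hp⟩
  rw [sq]
  exact mul_dvd_mul_left f (hf.dvd_of_dvd_mul_left hmul)

variable {S : Finset R}

lemma natDegree_derivative_nodal_id_lt_card [Nontrivial R] (hS : S.Nonempty) :
    (derivative (nodal S id)).natDegree < #S := by
  simpa only [natDegree_nodal] using
    natDegree_derivative_lt (p := nodal S id)
      (by simpa only [natDegree_nodal] using hS.card_ne_zero)

variable [IsDomain R]

lemma eval_derivative_nodal_id_ne_zero {α : R} (hα : α ∈ S) :
    (derivative (nodal S id)).eval α ≠ 0 := by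
  classical
  have h := eval_nodal_derivative_eval_node_eq (v := id) hα
  rw [id_eq] at h
  rw [h]
  exact eval_nodal_not_at_node fun β hβ ↦ (ne_of_mem_erase hβ).symm

lemma derivative_nodal_id_ne_zero (hS : S.Nonempty) : derivative (nodal S id) ≠ 0 := by
  obtain ⟨α, hα⟩ := hS
  intro h
  exact eval_derivative_nodal_id_ne_zero hα (by rw [h, eval_zero])

lemma nodal_roots_toFinset_id [DecidableEq R] {p : R[X]} (hp : p.Splits) (hmonic : p.Monic)
    (hsep : p.Separable) : nodal p.roots.toFinset id = p := by
  conv_rhs => rw [hp.eq_prod_roots_of_monic hmonic]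
  rw [nodal, prod_eq_multiset_prod, Multiset.toFinset_val, (nodup_roots hsep).dedup]
  rfl

end Polynomial

section Goppa

variable {F : Type*} [Field F] {G : F[X]} {S : Finset F}

/-- `S` is the support of a codeword of the binary Goppa code with Goppa polynomial `G`. The
location set is the largest possible one, namely the set of all non-roots of `G`. -/
def IsGoppaCodeword (G : F[X]) (S : Finset F) : Prop :=
  (∀ α ∈ S, G.eval α ≠ 0) ∧ ∀ j < G.natDegree, ∑ α ∈ S, α ^ j * (G.eval α)⁻¹ = 0

/-- The syndrome polynomial `-∑_{α ∈ S} 1 / (X - α)` modulo `G`, represented by the polynomial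
`∑_{α ∈ S} G(α)⁻¹ (G - G(α)) / (X - α)` of degree less than `deg G`. -/
noncomputable def goppaSyndrome (G : F[X]) (S : Finset F) : F[X] :=
  ∑ α ∈ S, C (G.eval α)⁻¹ * (G /ₘ (X - C α))

lemma coeff_goppaSyndrome (G : F[X]) (S : Finset F) (n : ℕ) :
    (goppaSyndrome G S).coeff n =
      ∑ i ∈ Icc (n + 1) G.natDegree,
        G.coeff i * ∑ α ∈ S, α ^ (i - (n + 1)) * (G.eval α)⁻¹ := by
  simp only [goppaSyndrome, finsetSum_coeff, coeff_C_mul, coeff_divByMonic_X_sub_C, mul_sum]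
  rw [sum_comm]
  exact sum_congr rfl fun i _ ↦ sum_congr rfl fun α _ ↦ by ring

lemma IsGoppaCodeword.goppaSyndrome_eq_zero (h : IsGoppaCodeword G S) :
    goppaSyndrome G S = 0 := by
  ext n
  rw [coeff_goppaSyndrome, coeff_zero]
  refine sum_eq_zero fun i hi ↦ ?_
  have hi' := mem_Icc.1 hi
  rw [h.2 (i - (n + 1)) (by omega), mul_zero]

lemma derivative_nodal_add_nodal_mul_goppaSyndrome [DecidableEq F] (h : ∀ α ∈ S, G.eval α ≠ 0) :
    derivative (nodal S id) + nodal S id * goppaSyndrome G S =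
      G * ∑ α ∈ S, C (G.eval α)⁻¹ * nodal (S.erase α) id := by
  rw [derivative_nodal, goppaSyndrome, mul_sum, mul_sum, ← sum_add_distrib]
  refine sum_congr rfl fun α hα ↦ ?_
  have hdiv : C (G.eval α) + (X - C α) * (G /ₘ (X - C α)) = G := by
    rw [← modByMonic_X_sub_C_eq_C_eval, modByMonic_add_div]
  have hinv : C (G.eval α) * C (G.eval α)⁻¹ = 1 := by
    rw [← C_mul, mul_inv_cancel₀ (h α hα), C_1]
  rw [nodal_eq_mul_nodal_erase hα, id_eq]
  linear_combination nodal (S.erase α) id * (C (G.eval α)⁻¹ * hdiv - hinv)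

lemma sum_eval_div_eval_derivative_nodal_id_eq_zero {f : F[X]} (hf : f.natDegree + 1 < #S) :
    ∑ α ∈ S, f.eval α / (derivative (nodal S id)).eval α = 0 := by
  classical
  have hdeg : f.degree < #S := degree_le_natDegree.trans_lt (by norm_cast; omega)
  have hcoeff := coeff_eq_sum (v := id) Function.injective_id.injOn hdeg
  rw [coeff_eq_zero_of_natDegree_lt (by omega)] at hcoeff
  rw [hcoeff]
  refine sum_congr rfl fun α hα ↦ ?_
  have hnode := eval_nodal_derivative_eval_node_eq (v := id) hα
  rw [eval_nodal] at hnode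
  exact congrArg (f.eval α / ·) hnode

theorem isGoppaCodeword_iff_dvd_derivative_nodal :
    IsGoppaCodeword G S ↔ G ∣ derivative (nodal S id) := by
  classical
  refine ⟨fun h ↦ ⟨∑ α ∈ S, C (G.eval α)⁻¹ * nodal (S.erase α) id, ?_⟩, fun ⟨Q, hQ⟩ ↦ ?_⟩
  · rw [← derivative_nodal_add_nodal_mul_goppaSyndrome h.1, h.goppaSyndrome_eq_zero, mul_zero,
      add_zero]
  have heval : ∀ α ∈ S, G.eval α * Q.eval α ≠ 0 := fun α hα ↦ by
    simpa only [hQ, eval_mul] using eval_derivative_nodal_id_ne_zero hα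
  refine ⟨fun α hα ↦ left_ne_zero_of_mul (heval α hα), fun j hj ↦ ?_⟩
  obtain rfl | hS := S.eq_empty_or_nonempty
  · exact sum_empty
  have hGQ : G * Q ≠ 0 := hQ ▸ derivative_nodal_id_ne_zero hS
  have hdeg : (X ^ j * Q).natDegree + 1 < #S := by
    have hlt := natDegree_derivative_nodal_id_lt_card hS
    rw [hQ, natDegree_mul (left_ne_zero_of_mul hGQ) (right_ne_zero_of_mul hGQ)] at hlt
    rw [natDegree_X_pow_mul j (right_ne_zero_of_mul hGQ)]
    omega
  rw [← sum_eval_div_eval_derivative_nodal_id_eq_zero hdeg]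
  refine sum_congr rfl fun α hα ↦ ?_
  rw [hQ, eval_mul, eval_mul, eval_pow, eval_X, mul_div_mul_right _ _
    (right_ne_zero_of_mul (heval α hα)), div_eq_mul_inv]

theorem IsGoppaCodeword.two_mul_natDegree_lt_card [CharP F 2] (h : IsGoppaCodeword G S)
    (hG : G.Separable) (hS : S.Nonempty) : 2 * G.natDegree < #S := by
  have hsq : G ^ 2 ∣ derivative (nodal S id) :=
    sq_dvd_of_separable_of_dvd hG (isGoppaCodeword_iff_dvd_derivative_nodal.1 h)
      (derivative_derivative_eq_zero_of_charTwo _)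
  calc 2 * G.natDegree = (G ^ 2).natDegree := (natDegree_pow G 2).symm
    _ ≤ (derivative (nodal S id)).natDegree :=
      natDegree_le_of_dvd hsq (derivative_nodal_id_ne_zero hS)
    _ < #S := natDegree_derivative_nodal_id_lt_card hS

theorem exists_isGoppaCodeword_card_eq_natDegree {p : F[X]} (hp : p.Splits) (hmonic : p.Monic)
    (hsep : p.Separable) (hdvd : G ∣ derivative p) :
    ∃ S : Finset F, IsGoppaCodeword G S ∧ #S = p.natDegree := by
  classical
  refine ⟨p.roots.toFinset, ?_, ?_⟩
  · rwa [isGoppaCodeword_iff_dvd_derivative_nodal, nodal_roots_toFinset_id hp hmonic hsep]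
  · rw [Multiset.toFinset_card_of_nodup (nodup_roots hsep), hp.natDegree_eq_card_roots]

end Goppa

section MinWeightLocator

variable {R : Type*} [CommRing R]

lemma natDegree_X_add_one_pow_add_C [Nontrivial R] (n : ℕ) (a : R) :
    ((X + 1) ^ n + C a).natDegree = n := by
  rw [natDegree_add_C, ← C_1, (monic_X_add_C 1).natDegree_pow, natDegree_X_add_C, mul_one]

lemma monic_X_add_one_pow_add_C {n : ℕ} (hn : n ≠ 0) (a : R) : ((X + 1) ^ n + C a).Monic := by
  simpa using (monic_X_pow_add_C a hn).comp_X_add_C 1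

lemma derivative_X_add_one_pow_succ {t : ℕ} (ht : (t : R) = 0) :
    derivative ((X + 1) ^ (t + 1) : R[X]) = (X + 1) ^ t := by
  rw [derivative_pow_succ, ht, zero_add, C_1, one_mul, derivative_add, derivative_X, derivative_one,
    add_zero, mul_one]

lemma separable_X_add_one_pow_succ_add_one [CharP R 2] {t : ℕ} (ht : (t : R) = 0) :
    ((X + 1) ^ (t + 1) + 1 : R[X]).Separable := by
  refine ⟨1, X + 1, ?_⟩
  have htwo : (2 : R[X]) = 0 := CharTwo.two_eq_zero
  rw [derivative_add, derivative_X_add_one_pow_succ ht, derivative_one]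
  linear_combination (X + 1) ^ (t + 1) * htwo

variable {F : Type*} [Field F]

/-- The locator polynomial of a codeword of minimum weight: `(X + 1) (u + r) (u + r⁻¹)`, where
`u = (X + 1) ^ (t + 1)`. -/
noncomputable def minWeightLocator (t : ℕ) (r : F) : F[X] :=
  (X + 1) * ((X + 1) ^ (t + 1) + C r) * ((X + 1) ^ (t + 1) + C r⁻¹)

lemma monic_minWeightLocator (t : ℕ) (r : F) : (minWeightLocator t r).Monic :=
  ((monic_X_add_C 1).mul (monic_X_add_one_pow_add_C t.succ_ne_zero r)).mul
    (monic_X_add_one_pow_add_C t.succ_ne_zero r⁻¹)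

lemma natDegree_minWeightLocator (t : ℕ) (r : F) :
    (minWeightLocator t r).natDegree = 2 * t + 3 := by
  have hmonic := monic_X_add_one_pow_add_C (R := F) t.succ_ne_zero
  have hX : (X + 1 : F[X]).Monic := monic_X_add_C 1
  rw [minWeightLocator, (hX.mul (hmonic r)).natDegree_mul (hmonic r⁻¹), hX.natDegree_mul (hmonic r),
    natDegree_X_add_one_pow_add_C, natDegree_X_add_one_pow_add_C, ← C_1, natDegree_X_add_C]
  omega

variable [CharP F 2] {t : ℕ}

lemma splits_X_add_one_pow_add_C_pow {n : ℕ} {ω : F} (hω : IsPrimitiveRoot ω n) (w : F) :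
    ((X + 1) ^ n + C (w ^ n)).Splits := by
  simpa [CharTwo.sub_eq_add] using
    (X_pow_sub_C_splits_of_isPrimitiveRoot hω (rfl : w ^ n = w ^ n)).comp_X_add_C 1

lemma splits_minWeightLocator {ω : F} (hω : IsPrimitiveRoot ω (t + 1)) (w : F) :
    (minWeightLocator t (w ^ (t + 1))).Splits := by
  rw [minWeightLocator, ← inv_pow]
  exact ((Splits.X_add_C 1).mul (splits_X_add_one_pow_add_C_pow hω w)).mul
    (splits_X_add_one_pow_add_C_pow hω w⁻¹)

lemma derivative_minWeightLocator (ht : (t : F) = 0) {r : F} (hr : r ≠ 0) :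
    derivative (minWeightLocator t r) = ((X + 1) ^ (t + 1) + 1) ^ 2 := by
  have htwo : (2 : F[X]) = 0 := CharTwo.two_eq_zero
  have hinv : C r * C r⁻¹ = 1 := by rw [← C_mul, mul_inv_cancel₀ hr, C_1]
  simp only [minWeightLocator, derivative_mul, derivative_add, derivative_X, derivative_one,
    derivative_C, derivative_X_add_one_pow_succ ht]
  linear_combination hinv +
    (X + 1) ^ (t + 1) * ((X + 1) ^ (t + 1) + C r + C r⁻¹ - 1) * htwo

lemma separable_minWeightLocator (ht : (t : F) = 0) {r : F} (hr : r ≠ 0) (hr' : r ≠ 1) :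
    (minWeightLocator t r).Separable := by
  have htwo : (2 : F[X]) = 0 := CharTwo.two_eq_zero
  have hinv : C r * C r⁻¹ = 1 := by rw [← C_mul, mul_inv_cancel₀ hr, C_1]
  have hc : r + r⁻¹ ≠ 0 := by
    rw [Ne, CharTwo.add_eq_zero, ← mul_eq_one_iff_eq_inv₀ hr, ← sq, ← one_pow 2]
    exact CharTwo.sq_injective.ne hr'
  have hcinv : C (r + r⁻¹)⁻¹ * (C r + C r⁻¹) = 1 := by
    rw [← C_add, ← C_mul, inv_mul_cancel₀ hc, C_1]
  have hbezout : (X + 1) ^ t * minWeightLocator t r +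
      ((X + 1) ^ (t + 1) + (C r + C r⁻¹)) * ((X + 1) ^ (t + 1) + 1) ^ 2 = C r + C r⁻¹ := by
    rw [minWeightLocator]
    linear_combination (X + 1) ^ (t + 1) * hinv + (X + 1) ^ (t + 1) *
      (((X + 1) ^ (t + 1) + 1) * ((X + 1) ^ (t + 1) + (C r + C r⁻¹)) + 1) * htwo
  refine ⟨C (r + r⁻¹)⁻¹ * (X + 1) ^ t,
    C (r + r⁻¹)⁻¹ * ((X + 1) ^ (t + 1) + (C r + C r⁻¹)), ?_⟩
  rw [derivative_minWeightLocator ht hr]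
  linear_combination C (r + r⁻¹)⁻¹ * hbezout + hcinv

end MinWeightLocator

lemma X_add_one_pow_two_pow_succ_add_one {R : Type*} [CommRing R] [CharP R 2] (l : ℕ) :
    ((X + 1) ^ (2 ^ l + 1) + 1 : R[X]) = X ^ (2 ^ l + 1) + X ^ 2 ^ l + X := by
  have htwo : (2 : R[X]) = 0 := CharTwo.two_eq_zero
  rw [pow_succ (X + 1), add_pow_char_pow, one_pow]
  linear_combination htwo

lemma natDegree_X_pow_succ_add_X_pow_add_X {R : Type*} [Semiring R] [Nontrivial R] {t : ℕ}
    (ht : t ≠ 0) : (X ^ (t + 1) + X ^ t + X : R[X]).natDegree = t + 1 := by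
  compute_degree!
  simp [ht]

lemma eval_X_pow_succ_add_X_pow_add_X_ne_zero_iff {R : Type*} [CommSemiring R]
    [NoZeroDivisors R] {t : ℕ} (ht : t ≠ 0) (α : R) :
    (X ^ (t + 1) + X ^ t + X : R[X]).eval α ≠ 0 ↔ α ≠ 0 ∧ α ^ t + α ^ (t - 1) + 1 ≠ 0 := by
  obtain ⟨k, rfl⟩ := Nat.exists_eq_succ_of_ne_zero ht
  rw [← mul_ne_zero_iff, Nat.succ_sub_one]
  simp only [eval_add, eval_pow, eval_X, Nat.succ_eq_add_one]
  ring_nf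

lemma isGoppaCodeword_X_pow_succ_add_X_pow_add_X_iff {F : Type*} [Field F] {t : ℕ}
    (ht : t ≠ 0) (S : Finset F) :
    IsGoppaCodeword (X ^ (t + 1) + X ^ t + X) S ↔
      (∀ α ∈ S, α ≠ 0 ∧ α ^ t + α ^ (t - 1) + 1 ≠ 0) ∧
        ∀ j < t + 1, ∑ α ∈ S, α ^ j * (α ^ (t + 1) + α ^ t + α)⁻¹ = 0 := by
  simp only [IsGoppaCodeword, natDegree_X_pow_succ_add_X_pow_add_X ht,
    eval_X_pow_succ_add_X_pow_add_X_ne_zero_iff ht]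
  simp only [eval_add, eval_pow, eval_X]

lemma natCast_eq_zero_of_isPrimitiveRoot_succ {F : Type*} [Field F] [CharP F 2] {l t : ℕ}
    (ht : t = 2 ^ l) {ω : F} (hω : IsPrimitiveRoot ω (t + 1)) : (t : F) = 0 := by
  have hl : l ≠ 0 := by
    rintro rfl
    have hne : ((t + 1 : ℕ) : F) ≠ 0 := hω.neZero'.ne
    exact hne (by rw [ht]; exact CharTwo.two_eq_zero)
  rw [ht, Nat.cast_pow, Nat.cast_ofNat, CharTwo.two_eq_zero, zero_pow hl]

lemma exists_isPrimitiveRoot_natCard_sub_one (F : Type*) [Field F] [Finite F] :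
    ∃ ζ : F, IsPrimitiveRoot ζ (Nat.card F - 1) := by
  obtain ⟨g, hg⟩ := IsCyclic.exists_ofOrder_eq_natCard (α := Fˣ)
  rw [Nat.card_units] at hg
  exact ⟨g, IsPrimitiveRoot.coe_units_iff.2 (hg ▸ IsPrimitiveRoot.orderOf g)⟩

lemma exists_isPrimitiveRoot_succ_and_pow_ne_one {F : Type*} [Field F] [Finite F] {t : ℕ}
    (ht : 2 < t) (hF : Nat.card F = t ^ 2) :
    ∃ ω w : F, IsPrimitiveRoot ω (t + 1) ∧ w ≠ 0 ∧ w ^ (t + 1) ≠ 1 := by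
  obtain ⟨ζ, hζ⟩ := exists_isPrimitiveRoot_natCard_sub_one F
  have hfactor : Nat.card F - 1 = (t + 1) * (t - 1) := by
    rw [hF, ← Nat.sq_sub_sq, one_pow]
  rw [hfactor] at hζ
  have hpos : 0 < (t + 1) * (t - 1) := Nat.mul_pos (by omega) (by omega)
  exact ⟨ζ ^ (t - 1), ζ, hζ.pow hpos (mul_comm _ _), hζ.ne_zero hpos.ne',
    (hζ.pow hpos rfl).ne_one (by omega)⟩

lemma natCard_galoisField_two_mul (p : ℕ) [Fact p.Prime] {l : ℕ} (hl : l ≠ 0) :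
    Nat.card (GaloisField p (2 * l)) = (p ^ l) ^ 2 := by
  rw [GaloisField.card p (2 * l) (mul_ne_zero two_ne_zero hl), ← pow_mul, mul_comm]

theorem stmt_16_general {F : Type*} [Field F] [CharP F 2] (l t : ℕ) (ht : t = 2 ^ l) {ω w : F}
    (hω : IsPrimitiveRoot ω (t + 1)) (hw : w ≠ 0) (hw' : w ^ (t + 1) ≠ 1) :
    (∀ S : Finset F,
        (∀ α ∈ S, α ≠ 0 ∧ α ^ t + α ^ (t - 1) + 1 ≠ 0) →
        (∀ j < t + 1, ∑ α ∈ S, α ^ j * (α ^ (t + 1) + α ^ t + α)⁻¹ = 0) →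
        S.Nonempty → 2 * t + 3 ≤ S.card) ∧
    (∃ S : Finset F,
        (∀ α ∈ S, α ≠ 0 ∧ α ^ t + α ^ (t - 1) + 1 ≠ 0) ∧
        (∀ j < t + 1, ∑ α ∈ S, α ^ j * (α ^ (t + 1) + α ^ t + α)⁻¹ = 0) ∧
        S.card = 2 * t + 3) := by
  have ht₀ : t ≠ 0 := by simp [ht]
  have hchar : (t : F) = 0 := natCast_eq_zero_of_isPrimitiveRoot_succ ht hω
  have hG : ((X + 1) ^ (t + 1) + 1 : F[X]) = X ^ (t + 1) + X ^ t + X :=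
    ht ▸ X_add_one_pow_two_pow_succ_add_one l
  have hcodeword := isGoppaCodeword_X_pow_succ_add_X_pow_add_X_iff (F := F) ht₀
  constructor
  · intro S hloc hsum hS
    have hlt := ((hcodeword S).2 ⟨hloc, hsum⟩).two_mul_natDegree_lt_card
      (hG ▸ separable_X_add_one_pow_succ_add_one hchar) hS
    rw [natDegree_X_pow_succ_add_X_pow_add_X ht₀] at hlt
    omega
  · have hr : w ^ (t + 1) ≠ 0 := pow_ne_zero _ hw
    obtain ⟨S, hS, hcard⟩ := exists_isGoppaCodeword_card_eq_natDegree
      (splits_minWeightLocator hω w) (monic_minWeightLocator t _)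
      (separable_minWeightLocator hchar hr hw')
      (derivative_minWeightLocator hchar hr ▸ dvd_pow_self _ two_ne_zero)
    rw [hG, hcodeword] at hS
    exact ⟨S, hS.1, hS.2, hcard.trans (natDegree_minWeightLocator t _)⟩

/-- Paper's Corollary 4 for `Γ(L₅, G₅)`: for `l ≥ 2`, `F = GF(2^(2l))`, `t = 2^l`,
`L₅ = {α : α ≠ 0 ∧ α^t + α^(t-1) + 1 ≠ 0}`, the minimum distance of the binary
Goppa code `Γ(L₅, X^(t+1) + X^t + X)` equals exactly its design distance
`2(t+1) + 1 = 2t + 3`. -/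
theorem stmt_16 (l : ℕ) (hl : 2 ≤ l) (t : ℕ) (ht : t = 2 ^ l) :
    (∀ S : Finset (GaloisField 2 (2 * l)),
        (∀ α ∈ S, α ≠ 0 ∧ α ^ t + α ^ (t - 1) + 1 ≠ 0) →
        (∀ j < t + 1, ∑ α ∈ S, α ^ j * (α ^ (t + 1) + α ^ t + α)⁻¹ = 0) →
        S.Nonempty → 2 * t + 3 ≤ S.card) ∧
    (∃ S : Finset (GaloisField 2 (2 * l)),
        (∀ α ∈ S, α ≠ 0 ∧ α ^ t + α ^ (t - 1) + 1 ≠ 0) ∧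
        (∀ j < t + 1, ∑ α ∈ S, α ^ j * (α ^ (t + 1) + α ^ t + α)⁻¹ = 0) ∧
        S.card = 2 * t + 3) := by
  obtain ⟨ω, w, hω, hw, hw'⟩ := exists_isPrimitiveRoot_succ_and_pow_ne_one
    (ht ▸ lt_self_pow₀ one_lt_two hl) (ht ▸ natCard_galoisField_two_mul 2 (by omega))
  exact stmt_16_general l t ht hω hw hw'
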